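/- arXiv:0903.4785 — 2 statements merged into one kernel-verified Lean document; each statement's English description precedes it below -/
import Mathlib

section
/- Let N ≥ 1, let w ≥ 2 be even, let n be an integer with 0 < n < w, set ñ = w − n, let D > 1 with gcd(N,D) = 1, and let h be an integer with gcd(h,D) = 1. Let c be an integer with c·N·h ≡ 1 (mod D). Define S_{3,h}(z) = 2·Σ_{k ∈ ℤ} 1/((Dz)^{ñ+1}·((c+kD)Nz + 1/D)^{n+1}) for z in the upper half-plane, and F_{3,h}(X) = ∫₀^{i∞} S_{3,h}(z)(X−z)^w dz + (−1)^{n−1}·∫₀^{i∞} S_{3,−h}(z)(X+z)^w dz. Then for every nonzero complex number X: F_{3,h}(X) = c_n·(−1)^{n−1}·(2i)^{w+1}·N^{ñ}·D^{w}·X^{w}·B_{ñ+1}({−c/D} − 1/(D²NX))/(ñ+1), where c_n = (−1)^n·4πi·(2i)^{−w−1}·C(w,n). -/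
open MeasureTheory Complex Real

noncomputable section

/-- The contour integral `∫₀^{i∞} F(z) dz` along the positive imaginary axis `z = iy`. -/
def intI (F : ℂ → ℂ) : ℂ := Complex.I * ∫ y in Set.Ioi (0 : ℝ), F (Complex.I * y)

/-- The constant `c_n = (−1)^n·4πi·(2i)^{−w−1}·C(w,n)`. -/
def cconst (w n : ℕ) : ℂ :=
  (-1) ^ n * 4 * Real.pi * Complex.I * (2 * Complex.I) ^ (-(w : ℤ) - 1) * (w.choose n)

/-- The `k`-th Bernoulli polynomial evaluated at a complex number. -/
def bpoly (k : ℕ) (x : ℂ) : ℂ := Polynomial.aeval x (Polynomial.bernoulli k)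

/-- `S_{3,h}(z) = 2 Σ_{k ∈ ℤ} 1/((Dz)^{ñ+1}((c+kD)Nz + 1/D)^{n+1})`, where `c` is an
inverse of `Nh` modulo `D`.  (Replacing `c` by `−c` gives `S_{3,−h}`.) -/
def S3 (N D w n : ℕ) (c : ℤ) (z : ℂ) : ℂ :=
  2 * ∑' k : ℤ, 1 / (((D : ℂ) * z) ^ (w - n + 1) *
      (((c : ℂ) + k * D) * N * z + 1 / D) ^ (n + 1))

/-- The lattice sum `∑_{k ∈ ℤ} 1 / (s + k) ^ (n + 1)`. -/
def latticeSum (n : ℕ) (s : ℂ) : ℂ := ∑' k : ℤ, 1 / (s + k) ^ (n + 1)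

/-- The lattice sum with its polar part at the origin removed. -/
def regLatticeSum (n : ℕ) (s : ℂ) : ℂ :=
  ∑' k : ℤ, if k = 0 then 0 else 1 / (s + k) ^ (n + 1)

lemma summable_latticeSum {n : ℕ} (hn : 0 < n) (s : ℂ) :
    Summable fun k : ℤ => 1 / (s + k) ^ (n + 1) := by
  have := EisensteinSeries.linear_right_summable s 1 (k := (n + 1 : ℕ)) (by norm_cast; omega)
  simpa only [zpow_natCast, Int.cast_one, one_mul, one_div] using this

lemma latticeSum_add_int (n : ℕ) (s : ℂ) (m : ℤ) :
    latticeSum n (s + m) = latticeSum n s := by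
  unfold latticeSum
  rw [← (Equiv.addLeft m).tsum_eq (fun k : ℤ => 1 / (s + k) ^ (n + 1))]
  simp [add_assoc]

lemma latticeSum_neg (n : ℕ) (s : ℂ) :
    latticeSum n (-s) = (-1) ^ (n + 1) * latticeSum n s := by
  unfold latticeSum
  rw [← tsum_mul_left, ← (Equiv.neg ℤ).tsum_eq (fun k : ℤ => 1 / (-s + k) ^ (n + 1))]
  refine tsum_congr fun k => ?_
  have : (-s + ((Equiv.neg ℤ k : ℤ) : ℂ)) = (-1) * (s + k) := by
    simp; ring
  rw [this, mul_pow]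
  rcases neg_one_pow_eq_or ℂ (n + 1) with h | h <;> simp [h]

lemma latticeSum_eq_polar_add_regLatticeSum {n : ℕ} (hn : 0 < n) (s : ℂ) :
    latticeSum n s = 1 / s ^ (n + 1) + regLatticeSum n s := by
  unfold latticeSum regLatticeSum
  rw [(summable_latticeSum hn s).tsum_eq_add_tsum_ite 0]
  simp

lemma differentiableOn_regLatticeSum {n : ℕ} (hn : 0 < n) {r : ℝ} (hr : r < 1) :
    DifferentiableOn ℂ (regLatticeSum n) {s | |s.re| < r} := by
  have key : ∀ (k : ℤ), k ≠ 0 → ∀ s : ℂ, |s.re| < r → (1 - r) * |(k : ℝ)| ≤ ‖s + k‖ := by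
    intro k hk s hs
    have h1 : (1 : ℝ) ≤ |(k : ℝ)| := by exact_mod_cast Int.one_le_abs hk
    have h2 : |(k : ℝ)| - |s.re| ≤ |s.re + k| := by
      have := abs_sub_abs_le_abs_sub (k : ℝ) (-s.re)
      rw [abs_neg, sub_neg_eq_add, add_comm (k : ℝ)] at this
      exact this
    have h3 : |s.re + k| ≤ ‖s + k‖ := by
      simpa using Complex.abs_re_le_norm (s + k)
    have : 0 ≤ r := (abs_nonneg _).trans hs.le
    nlinarith
  have hu : Summable fun k : ℤ => (1 / (1 - r) ^ (n + 1)) * ‖1 / (k : ℝ) ^ (n + 1)‖ := by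
    apply Summable.mul_left
    exact (Real.summable_one_div_int_pow.mpr (by omega)).norm
  refine differentiableOn_tsum_of_summable_norm hu ?_ ?_ ?_
  · intro k
    by_cases hk : k = 0
    · simp [hk]
    · simp only [hk, if_false]
      intro s hs
      have h1 := key k hk s hs
      have h2 : 0 < |(k : ℝ)| := abs_pos.mpr (by exact_mod_cast hk)
      have h3 : s + k ≠ 0 := norm_pos_iff.mp (lt_of_lt_of_le (mul_pos (by linarith) h2) h1)
      refine DifferentiableAt.differentiableWithinAt ?_
      exact (differentiableAt_const _).div (by fun_prop) (pow_ne_zero _ h3)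
  · exact isOpen_lt (by fun_prop) continuous_const
  · intro k s hs
    by_cases hk : k = 0
    · simp [hk]
    · simp only [hk, if_false]
      have h1 := key k hk s hs
      have h2 : 0 < |(k : ℝ)| := abs_pos.mpr (by exact_mod_cast hk)
      rw [norm_div, norm_pow, norm_div, norm_pow, norm_one, norm_one, Real.norm_eq_abs,
        div_mul_div_comm, one_mul, ← mul_pow]
      have : 0 < (1 - r) * |(k : ℝ)| := mul_pos (by linarith) h2
      gcongr

lemma exists_norm_latticeSum_le {n : ℕ} (hn : 0 < n) :
    ∃ C : ℝ, 0 ≤ C ∧ ∀ s : ℂ, 1 ≤ |s.im| → ‖latticeSum n s‖ ≤ C * Real.exp (-|s.im|) := by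
  have hsum : Summable fun m : ℕ => (m : ℝ) ^ n * Real.exp (-1 * m) := by
    simpa using Real.summable_pow_mul_exp_neg_nat_mul n one_pos
  set A : ℝ := ‖((-2 * π * I) ^ (n + 1) / n.factorial : ℂ)‖ with hA
  set B : ℝ := ∑' m : ℕ, (m : ℝ) ^ n * Real.exp (-1 * m) with hB
  have hB0 : 0 ≤ B := tsum_nonneg fun m => by positivity
  have up : ∀ s : ℂ, 1 ≤ s.im → ‖latticeSum n s‖ ≤ A * B * Real.exp (-s.im) := by
    intro s hs
    have h := EisensteinSeries.qExpansion_identity hn ⟨s, by linarith⟩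
    change latticeSum n s = _ at h
    rw [h, norm_mul, ← hA, mul_assoc A]
    refine mul_le_mul_of_nonneg_left ?_ (norm_nonneg _)
    rw [hB, ← tsum_mul_right]
    refine tsum_of_norm_bounded (hsum.mul_right _).hasSum fun m => ?_
    rw [norm_mul, norm_pow, norm_pow, Complex.norm_exp, Complex.norm_natCast,
      mul_assoc ((m : ℝ) ^ n)]
    rcases Nat.eq_zero_or_pos m with rfl | hm
    · simp [hn.ne']
    refine mul_le_mul_of_nonneg_left ?_ (by positivity)
    rw [← Real.exp_nat_mul, ← Real.exp_add, Real.exp_le_exp]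
    have hm' : (1 : ℝ) ≤ m := by exact_mod_cast hm
    have hre : (2 * π * I * ((⟨s, by linarith⟩ : UpperHalfPlane) : ℂ)).re = -(2 * π * s.im) := by
      simp
    rw [hre]
    have hpi := Real.pi_gt_three
    have : (1 : ℝ) ≤ π := by linarith
    have h1 : (m : ℝ) * s.im ≤ π * (m * s.im) := by
      have : 0 ≤ (m : ℝ) * s.im := by positivity
      nlinarith
    nlinarith
  refine ⟨A * B, by positivity, fun s hs => ?_⟩
  rcases le_abs.mp hs with h | h
  · rw [abs_of_nonneg (by linarith)]; exact up s h
  · rw [abs_of_nonpos (by linarith)]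
    have := up (-s) (by simpa using h)
    rw [latticeSum_neg, norm_mul, norm_pow, norm_neg, norm_one, one_pow, one_mul] at this
    simpa using this

lemma exists_norm_pow_mul_latticeSum_le {n : ℕ} (hn : 0 < n) (j : ℕ) :
    ∃ C : ℝ, 0 ≤ C ∧ ∀ s : ℂ, |s.re| ≤ 1 → 1 ≤ |s.im| →
      ‖s ^ j * latticeSum n s‖ ≤ C * (1 + s.im ^ 2)⁻¹ := by
  obtain ⟨C, hC, h⟩ := exists_norm_latticeSum_le hn
  refine ⟨C * ((j + 2).factorial * Real.exp 1), by positivity, fun s hs hs' => ?_⟩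
  have h1 : ‖s‖ ≤ 1 + |s.im| := (Complex.norm_le_abs_re_add_abs_im s).trans (by linarith)
  have h2 : (1 + |s.im|) ^ (j + 2) ≤ (j + 2).factorial * Real.exp (1 + |s.im|) := by
    have := Real.pow_div_factorial_le_exp (1 + |s.im|) (by positivity) (j + 2)
    rwa [div_le_iff₀' (by positivity)] at this
  have h3 : 1 + s.im ^ 2 ≤ (1 + |s.im|) ^ 2 := by
    nlinarith [sq_abs s.im, abs_nonneg s.im]
  have h4 : 0 < 1 + s.im ^ 2 := by positivity
  rw [← div_eq_mul_inv, le_div_iff₀ h4, norm_mul, norm_pow]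
  calc ‖s‖ ^ j * ‖latticeSum n s‖ * (1 + s.im ^ 2)
      ≤ (1 + |s.im|) ^ j * (C * Real.exp (-|s.im|)) * (1 + |s.im|) ^ 2 := by
        gcongr
        exact h s hs'
    _ = C * Real.exp (-|s.im|) * (1 + |s.im|) ^ (j + 2) := by ring
    _ ≤ C * Real.exp (-|s.im|) * ((j + 2).factorial * Real.exp (1 + |s.im|)) := by gcongr
    _ = C * ((j + 2).factorial * (Real.exp (-|s.im|) * Real.exp (1 + |s.im|))) := by ring
    _ = _ := by
        rw [← Real.exp_add]; simp

lemma continuous_latticeSum_vertical {n : ℕ} (hn : 0 < n) {a : ℝ} (ha : a ≠ 0) (ha' : |a| < 1) :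
    Continuous fun y : ℝ => latticeSum n (a + y * I) := by
  obtain ⟨r, hr, hr'⟩ := exists_between ha'
  have hU : IsOpen {s : ℂ | |s.re| < r} := isOpen_lt (by fun_prop) continuous_const
  simp_rw [latticeSum_eq_polar_add_regLatticeSum hn]
  refine Continuous.add ?_ ?_
  · refine continuous_const.div (by fun_prop) fun y => pow_ne_zero _ fun h0 => ha ?_
    simpa using congrArg Complex.re h0
  · rw [continuous_iff_continuousAt]
    intro y
    have h1 : ContinuousAt (regLatticeSum n) (a + y * I) :=
      (differentiableOn_regLatticeSum hn hr').continuousOn.continuousAt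
        (hU.mem_nhds (by simpa using hr))
    exact ContinuousAt.comp (f := fun y : ℝ => (a + y * I : ℂ)) h1 (by fun_prop)

lemma integrable_pow_mul_latticeSum_vertical {n : ℕ} (hn : 0 < n) (j : ℕ) {a : ℝ} (ha : a ≠ 0)
    (ha' : |a| < 1) :
    Integrable fun y : ℝ => (a + y * I : ℂ) ^ j * latticeSum n (a + y * I) := by
  obtain ⟨C, hC, h⟩ := exists_norm_pow_mul_latticeSum_le hn j
  have hcont : Continuous fun y : ℝ => (a + y * I : ℂ) ^ j * latticeSum n (a + y * I) :=
    (by fun_prop : Continuous fun y : ℝ => (a + y * I : ℂ) ^ j).mul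
      (continuous_latticeSum_vertical hn ha ha')
  refine hcont.locallyIntegrable.integrable_of_isBigO_cocompact
    (g := fun y : ℝ => (1 + y ^ 2)⁻¹) ?_ (integrable_inv_one_add_sq.integrableAtFilter _)
  refine Asymptotics.IsBigO.of_bound C ?_
  filter_upwards [(tendsto_norm_cocompact_atTop (E := ℝ)).eventually_ge_atTop 1] with y hy
  have h4 : (0 : ℝ) < (1 + y ^ 2)⁻¹ := by positivity
  rw [Real.norm_of_nonneg h4.le]
  simpa using h (a + y * I) (by simpa using ha'.le) (by simpa using hy)

/-- The integral of `f` along the positively oriented boundary of the rectangle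
`[a - 1, a] × [-T, T]`. -/
def rectIntegral (f : ℂ → ℂ) (a T : ℝ) : ℂ :=
  (∫ x in (a - 1)..a, f (x + (-T : ℝ) * I)) - (∫ x in (a - 1)..a, f (x + T * I)) +
    I * (∫ y in (-T)..T, f (a + y * I)) - I * ∫ y in (-T)..T, f ((a - 1 : ℝ) + y * I)

lemma integral_horizontal_eq_sub {f F : ℂ → ℂ} {b b' c : ℝ}
    (hF : ∀ x : ℝ, HasDerivAt F (f (x + c * I)) (x + c * I))
    (hf : Continuous fun x : ℝ => f (x + c * I)) :
    ∫ x in b..b', f (x + c * I) = F (b' + c * I) - F (b + c * I) := by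
  refine intervalIntegral.integral_eq_sub_of_hasDerivAt (f := fun x : ℝ => F (x + c * I))
    (fun x _ => ?_) (hf.intervalIntegrable _ _)
  have h1 : HasDerivAt (fun x : ℝ => (x + c * I : ℂ)) 1 x :=
    (Complex.ofRealCLM.hasDerivAt (x := x)).add_const _
  have h2 := (hF x).comp x h1
  rw [mul_one] at h2
  exact h2

lemma integral_vertical_eq_sub {f F : ℂ → ℂ} {b c c' : ℝ}
    (hF : ∀ y : ℝ, HasDerivAt F (f (b + y * I)) (b + y * I))
    (hf : Continuous fun y : ℝ => f (b + y * I)) :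
    I * ∫ y in c..c', f (b + y * I) = F (b + c' * I) - F (b + c * I) := by
  rw [← intervalIntegral.integral_const_mul]
  refine intervalIntegral.integral_eq_sub_of_hasDerivAt (f := fun y : ℝ => F (b + y * I))
    (fun y _ => ?_) ((continuous_const.mul hf).intervalIntegrable _ _)
  have h1 : HasDerivAt (fun y : ℝ => (b + y * I : ℂ)) I y := by
    simpa using ((Complex.ofRealCLM.hasDerivAt (x := y)).mul_const I).const_add (b : ℂ)
  rw [mul_comm I]
  exact (hF y).comp y h1

lemma horizontal_ne_zero {c : ℝ} (hc : c ≠ 0) (x : ℝ) : (x + c * I : ℂ) ≠ 0 :=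
  fun h => hc (by simpa using congrArg Complex.im h)

lemma vertical_ne_zero {b : ℝ} (hb : b ≠ 0) (y : ℝ) : (b + y * I : ℂ) ≠ 0 :=
  fun h => hb (by simpa using congrArg Complex.re h)

lemma rectIntegral_zpow {a T : ℝ} (ha0 : 0 < a) (ha1 : a < 1) (hT : 0 < T) {k : ℤ}
    (hk : k ≠ -1) : rectIntegral (fun s => s ^ k) a T = 0 := by
  have hk' : ((k + 1 : ℤ) : ℂ) ≠ 0 := by
    exact_mod_cast fun h => hk (by omega)
  have hF : ∀ s : ℂ, s ≠ 0 → HasDerivAt (fun s : ℂ => s ^ (k + 1) / (k + 1 : ℤ)) (s ^ k) s := by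
    intro s hs
    have h := (hasDerivAt_zpow (k + 1) s (Or.inl hs)).div_const ((k + 1 : ℤ) : ℂ)
    rw [add_sub_cancel_right, mul_div_cancel_left₀ _ hk'] at h
    exact h
  have hh : ∀ c : ℝ, c ≠ 0 → Continuous fun x : ℝ => (x + c * I : ℂ) ^ k := fun c hc =>
    (by fun_prop : Continuous fun x : ℝ => (x + c * I : ℂ)).zpow₀ k
      fun x => Or.inl (horizontal_ne_zero hc x)
  have hv : ∀ b : ℝ, b ≠ 0 → Continuous fun y : ℝ => (b + y * I : ℂ) ^ k := fun b hb =>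
    (by fun_prop : Continuous fun y : ℝ => (b + y * I : ℂ)).zpow₀ k
      fun y => Or.inl (vertical_ne_zero hb y)
  have hT' : -T ≠ 0 := by linarith
  have hb : a - 1 ≠ 0 := by linarith
  unfold rectIntegral
  rw [integral_horizontal_eq_sub (f := fun s => s ^ k)
      (fun x => hF _ (horizontal_ne_zero hT' x)) (hh _ hT'),
    integral_horizontal_eq_sub (f := fun s => s ^ k)
      (fun x => hF _ (horizontal_ne_zero hT.ne' x)) (hh _ hT.ne'),
    integral_vertical_eq_sub (f := fun s => s ^ k)
      (fun y => hF _ (vertical_ne_zero ha0.ne' y)) (hv _ ha0.ne'),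
    integral_vertical_eq_sub (f := fun s => s ^ k)
      (fun y => hF _ (vertical_ne_zero hb y)) (hv _ hb)]
  ring

lemma rectIntegral_inv {a T : ℝ} (ha0 : 0 < a) (ha1 : a < 1) (hT : 0 < T) :
    rectIntegral (fun s => s⁻¹) a T = 2 * π * I := by
  have hF : ∀ s : ℂ, s ∈ slitPlane → HasDerivAt Complex.log s⁻¹ s :=
    fun s hs => Complex.hasDerivAt_log hs
  have hF' : ∀ s : ℂ, -s ∈ slitPlane → HasDerivAt (fun s => Complex.log (-s)) s⁻¹ s := by
    intro s hs
    have h := (Complex.hasDerivAt_log hs).comp s (hasDerivAt_neg s)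
    rw [inv_neg, mul_neg_one, neg_neg] at h
    exact h
  have hh : ∀ c : ℝ, c ≠ 0 → Continuous fun x : ℝ => (x + c * I : ℂ)⁻¹ := fun c hc =>
    (by fun_prop : Continuous fun x : ℝ => (x + c * I : ℂ)).inv₀ (horizontal_ne_zero hc)
  have hv : ∀ b : ℝ, b ≠ 0 → Continuous fun y : ℝ => (b + y * I : ℂ)⁻¹ := fun b hb =>
    (by fun_prop : Continuous fun y : ℝ => (b + y * I : ℂ)).inv₀ (vertical_ne_zero hb)
  have hT' : -T ≠ 0 := by linarith
  have hb : a - 1 ≠ 0 := by linarith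
  unfold rectIntegral
  rw [integral_horizontal_eq_sub (f := fun s => s⁻¹)
      (fun x => hF _ (Or.inr (by simpa using hT.ne'))) (hh _ hT'),
    integral_horizontal_eq_sub (f := fun s => s⁻¹)
      (fun x => hF _ (Or.inr (by simpa using hT.ne'))) (hh _ hT.ne'),
    integral_vertical_eq_sub (f := fun s => s⁻¹)
      (fun y => hF _ (Or.inl (by simpa using ha0))) (hv _ ha0.ne'),
    integral_vertical_eq_sub (f := fun s => s⁻¹)
      (fun y => hF' _ (Or.inl (by simpa using ha1))) (hv _ hb)]
  have hlog : ∀ z : ℂ, 0 < z.im → Complex.log (-z) = Complex.log z - π * I := by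
    intro z hz
    simp only [Complex.log, norm_neg, arg_neg_eq_arg_sub_pi_of_im_pos hz]
    push_cast; ring
  have h1 := hlog ((a - 1 : ℝ) + T * I) (by simpa using hT)
  have h2 := hlog (-((a - 1 : ℝ) + (-T : ℝ) * I)) (by simpa using hT)
  rw [neg_neg] at h2
  rw [h1, h2]
  ring

lemma rectIntegral_eq_zero_of_differentiableOn {f : ℂ → ℂ} {a T r : ℝ} (ha : a < r)
    (ha' : 1 - a < r) (hf : DifferentiableOn ℂ f {s | |s.re| < r}) :
    rectIntegral f a T = 0 := by
  have h := Complex.integral_boundary_rect_eq_zero_of_differentiableOn f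
    ((a - 1 : ℝ) + (-T : ℝ) * I) (a + T * I) (hf.mono ?_)
  · simpa [rectIntegral] using h
  · intro s hs
    have hs1 : s.re ∈ Set.uIcc (a - 1) a := by simpa using hs.1
    rw [Set.uIcc_of_le (by linarith)] at hs1
    rw [Set.mem_ofPred_eq, abs_lt]
    exact ⟨by linarith [hs1.1], by linarith [hs1.2]⟩

lemma rectIntegral_add {f g : ℂ → ℂ} {a T r : ℝ} (ha0 : 0 < a) (ha1 : a < 1) (hT : 0 < T)
    (ha : a < r) (ha' : 1 - a < r) (hf : ContinuousOn f ({s | |s.re| < r} ∩ {0}ᶜ))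
    (hg : ContinuousOn g ({s | |s.re| < r} ∩ {0}ᶜ)) :
    rectIntegral (fun s => f s + g s) a T = rectIntegral f a T + rectIntegral g a T := by
  have hT' : -T ≠ 0 := by linarith
  have hb : a - 1 ≠ 0 := by linarith
  have hor : ∀ u : ℂ → ℂ, ContinuousOn u ({s | |s.re| < r} ∩ {0}ᶜ) → ∀ c : ℝ, c ≠ 0 →
      IntervalIntegrable (fun x : ℝ => u (x + c * I)) volume (a - 1) a := by
    intro u hu c hc
    refine ContinuousOn.intervalIntegrable (hu.comp (by fun_prop) fun x hx => ?_)
    rw [Set.uIcc_of_le (by linarith)] at hx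
    refine ⟨?_, horizontal_ne_zero hc x⟩
    simpa using abs_lt.mpr ⟨by linarith [hx.1], by linarith [hx.2]⟩
  have ver : ∀ u : ℂ → ℂ, ContinuousOn u ({s | |s.re| < r} ∩ {0}ᶜ) → ∀ b : ℝ, b ≠ 0 → |b| < r →
      IntervalIntegrable (fun y : ℝ => u (b + y * I)) volume (-T) T := by
    intro u hu b hb hbr
    refine ContinuousOn.intervalIntegrable (hu.comp (by fun_prop) fun y hy => ?_)
    exact ⟨by simpa using hbr, vertical_ne_zero hb y⟩
  have hra : |a| < r := by rwa [abs_of_pos ha0]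
  have hrb : |a - 1| < r := by rw [abs_of_neg (by linarith)]; linarith
  unfold rectIntegral
  rw [intervalIntegral.integral_add (hor f hf _ hT') (hor g hg _ hT'),
    intervalIntegral.integral_add (hor f hf _ hT.ne') (hor g hg _ hT.ne'),
    intervalIntegral.integral_add (ver f hf _ ha0.ne' hra) (ver g hg _ ha0.ne' hra),
    intervalIntegral.integral_add (ver f hf _ hb hrb) (ver g hg _ hb hrb)]
  ring

lemma rectIntegral_pow_mul_latticeSum {n : ℕ} (hn : 0 < n) (j : ℕ) {a T : ℝ} (ha0 : 0 < a)
    (ha1 : a < 1) (hT : 0 < T) :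
    rectIntegral (fun s => s ^ j * latticeSum n s) a T = if j = n then 2 * π * I else 0 := by
  obtain ⟨r, hr, hr1⟩ := exists_between (max_lt ha1 (by linarith : 1 - a < 1))
  obtain ⟨har, har'⟩ := max_lt_iff.mp hr
  have hreg : DifferentiableOn ℂ (fun s => s ^ j * regLatticeSum n s) {s | |s.re| < r} :=
    (by fun_prop : DifferentiableOn ℂ (fun s : ℂ => s ^ j) _).mul
      (differentiableOn_regLatticeSum hn hr1)
  have hpol : ContinuousOn (fun s : ℂ => s ^ ((j : ℤ) - (n + 1 : ℕ)))
      ({s | |s.re| < r} ∩ {0}ᶜ) :=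
    continuousOn_id.zpow₀ _ fun s hs => Or.inl hs.2
  have hcongr : rectIntegral (fun s => s ^ j * latticeSum n s) a T =
      rectIntegral (fun s => s ^ ((j : ℤ) - (n + 1 : ℕ)) + s ^ j * regLatticeSum n s) a T := by
    have key : ∀ s : ℂ, s ≠ 0 → s ^ j * latticeSum n s =
        s ^ ((j : ℤ) - (n + 1 : ℕ)) + s ^ j * regLatticeSum n s := by
      intro s hs
      rw [latticeSum_eq_polar_add_regLatticeSum hn, zpow_sub₀ hs, zpow_natCast, zpow_natCast]
      ring
    unfold rectIntegral
    simp only [key _ (horizontal_ne_zero (by linarith : -T ≠ 0) _),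
      key _ (horizontal_ne_zero hT.ne' _), key _ (vertical_ne_zero ha0.ne' _),
      key _ (vertical_ne_zero (by linarith : a - 1 ≠ 0) _)]
  rw [hcongr, rectIntegral_add ha0 ha1 hT har har' hpol
    (hreg.continuousOn.mono Set.inter_subset_left),
    rectIntegral_eq_zero_of_differentiableOn har har' hreg, add_zero]
  split_ifs with hj
  · subst hj
    rw [← rectIntegral_inv ha0 ha1 hT]
    congr 1
    ext s
    rw [show (j : ℤ) - (j + 1 : ℕ) = -1 by push_cast; ring, zpow_neg_one]
  · exact rectIntegral_zpow ha0 ha1 hT (by push_cast; omega)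

/-- Residue evaluation of the difference of the integrals of `s ^ j * latticeSum n s` along two
vertical lines on both sides of the pole at the origin. -/
lemma integral_pow_mul_latticeSum_sub {n : ℕ} (hn : 0 < n) (j : ℕ) {a : ℝ} (ha0 : 0 < a)
    (ha1 : a < 1) :
    I * ((∫ y : ℝ, (a + y * I : ℂ) ^ j * latticeSum n (a + y * I)) -
      ∫ y : ℝ, ((a - 1 : ℝ) + y * I : ℂ) ^ j * latticeSum n ((a - 1 : ℝ) + y * I)) =
      if j = n then 2 * π * I else 0 := by
  have hb1 : |a - 1| < 1 := by rw [abs_of_neg (by linarith)]; linarith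
  have h1 := intervalIntegral_tendsto_integral
    (integrable_pow_mul_latticeSum_vertical hn j ha0.ne' (by rwa [abs_of_pos ha0]))
    Filter.tendsto_neg_atTop_atBot Filter.tendsto_id
  have h2 := intervalIntegral_tendsto_integral
    (integrable_pow_mul_latticeSum_vertical hn j (by linarith : a - 1 ≠ 0) hb1)
    Filter.tendsto_neg_atTop_atBot Filter.tendsto_id
  obtain ⟨C, hC, hbd⟩ := exists_norm_pow_mul_latticeSum_le hn j
  have hlim : Filter.Tendsto (fun T : ℝ => C * (1 + T ^ 2)⁻¹) Filter.atTop (nhds 0) := by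
    have : Filter.Tendsto (fun T : ℝ => 1 + T ^ 2) Filter.atTop Filter.atTop :=
      Filter.tendsto_atTop_add_const_left _ _ (Filter.tendsto_pow_atTop two_ne_zero)
    simpa using this.inv_tendsto_atTop.const_mul C
  have hor : ∀ T : ℝ, 1 ≤ |T| →
      ‖∫ x in (a - 1)..a, (x + T * I : ℂ) ^ j * latticeSum n (x + T * I)‖ ≤
        C * (1 + T ^ 2)⁻¹ := by
    intro T hT
    have := intervalIntegral.norm_integral_le_of_norm_le_const (a := a - 1) (b := a)
      (f := fun x : ℝ => (x + T * I : ℂ) ^ j * latticeSum n (x + T * I))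
      (C := C * (1 + T ^ 2)⁻¹) fun x hx => ?_
    · simpa using this
    · rw [Set.uIoc_of_le (by linarith)] at hx
      have hx1 : |x| ≤ 1 := abs_le.mpr ⟨by linarith [hx.1], by linarith [hx.2]⟩
      simpa using hbd (x + T * I) (by simpa using hx1) (by simpa using hT)
  have htop : Filter.Tendsto (fun T : ℝ =>
      ∫ x in (a - 1)..a, (x + T * I : ℂ) ^ j * latticeSum n (x + T * I)) Filter.atTop
      (nhds 0) := by
    refine squeeze_zero_norm' ?_ hlim
    filter_upwards [Filter.eventually_ge_atTop 1] with T hT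
    exact hor T (hT.trans (le_abs_self T))
  have hbot : Filter.Tendsto (fun T : ℝ =>
      ∫ x in (a - 1)..a, (x + (-T : ℝ) * I : ℂ) ^ j * latticeSum n (x + (-T : ℝ) * I))
      Filter.atTop (nhds 0) := by
    refine squeeze_zero_norm' ?_ hlim
    filter_upwards [Filter.eventually_ge_atTop 1] with T hT
    simpa only [neg_sq] using hor (-T) (by rw [abs_neg]; exact hT.trans (le_abs_self T))
  have hall := ((hbot.sub htop).add (h1.const_mul I)).sub (h2.const_mul I)
  have hconst : Filter.Tendsto (fun T : ℝ => rectIntegral (fun s => s ^ j * latticeSum n s) a T)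
      Filter.atTop (nhds (if j = n then 2 * π * I else 0)) := by
    refine Filter.Tendsto.congr' ?_ tendsto_const_nhds
    filter_upwards [Filter.eventually_gt_atTop 0] with T hT
    exact (rectIntegral_pow_mul_latticeSum hn j ha0 ha1 hT).symm
  have := tendsto_nhds_unique hall hconst
  rw [← this]
  ring

lemma integral_eval_mul_latticeSum_sub {n : ℕ} (hn : 0 < n) (R : Polynomial ℂ) {a : ℝ}
    (ha0 : 0 < a) (ha1 : a < 1) :
    I * ∫ y : ℝ, (R.eval (a + y * I : ℂ) - R.eval (a + y * I - 1 : ℂ)) *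
      latticeSum n (a + y * I) = 2 * π * I * R.coeff n := by
  have hb1 : |a - 1| < 1 := by rw [abs_of_neg (by linarith)]; linarith
  have hper : ∀ y : ℝ, latticeSum n (a + y * I) = latticeSum n ((a - 1 : ℝ) + y * I) := by
    intro y
    rw [← latticeSum_add_int n ((a - 1 : ℝ) + y * I) 1]
    congr 1
    push_cast; ring
  have hsub : ∀ y : ℝ, (a + y * I - 1 : ℂ) = (a - 1 : ℝ) + y * I := by
    intro y; push_cast; ring
  have h1 := fun j => integrable_pow_mul_latticeSum_vertical hn j ha0.ne'
    (by rwa [abs_of_pos ha0])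
  have h2 := fun j => integrable_pow_mul_latticeSum_vertical hn j (by linarith : a - 1 ≠ 0) hb1
  have hterm : ∀ y : ℝ, (R.eval (a + y * I : ℂ) - R.eval (a + y * I - 1 : ℂ)) *
      latticeSum n (a + y * I) = ∑ j ∈ R.support, R.coeff j *
        ((a + y * I : ℂ) ^ j * latticeSum n (a + y * I) -
          ((a - 1 : ℝ) + y * I : ℂ) ^ j * latticeSum n ((a - 1 : ℝ) + y * I)) := by
    intro y
    rw [hsub, sub_mul, Polynomial.eval_eq_sum, Polynomial.eval_eq_sum, Polynomial.sum,
      Polynomial.sum, ← hper, Finset.sum_mul, Finset.sum_mul, ← Finset.sum_sub_distrib]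
    exact Finset.sum_congr rfl fun j _ => by ring
  have hint : ∀ j, Integrable fun y : ℝ => R.coeff j *
      ((a + y * I : ℂ) ^ j * latticeSum n (a + y * I) -
        ((a - 1 : ℝ) + y * I : ℂ) ^ j * latticeSum n ((a - 1 : ℝ) + y * I)) :=
    fun j => ((h1 j).sub (h2 j)).const_mul _
  simp_rw [hterm]
  rw [integral_finsetSum _ fun j _ => hint j, Finset.mul_sum]
  have hval : ∀ j ∈ R.support, I * ∫ y : ℝ, R.coeff j *
        ((a + y * I : ℂ) ^ j * latticeSum n (a + y * I) -
          ((a - 1 : ℝ) + y * I : ℂ) ^ j * latticeSum n ((a - 1 : ℝ) + y * I)) =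
      if j = n then 2 * π * I * R.coeff n else 0 := by
    intro j _
    rw [integral_const_mul, integral_sub (h1 j) (h2 j), mul_left_comm,
      integral_pow_mul_latticeSum_sub hn j ha0 ha1]
    split_ifs with hj
    · subst hj; ring
    · simp
  rw [Finset.sum_congr rfl hval, Finset.sum_ite_eq']
  split_ifs with hs
  · rfl
  · rw [Polynomial.notMem_support_iff.mp hs, mul_zero]

lemma bpoly_eq_eval (k : ℕ) (x : ℂ) :
    bpoly k x = ((Polynomial.bernoulli k).map (algebraMap ℚ ℂ)).eval x := by
  rw [bpoly, Polynomial.aeval_def, Polynomial.eval_map]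

lemma bpoly_one_add_sub (w : ℕ) (x : ℂ) :
    bpoly (w + 1) (1 + x) - bpoly (w + 1) x = (w + 1) * x ^ w := by
  have h := congrArg (Polynomial.aeval x) (Polynomial.bernoulli_comp_one_add_X (w + 1))
  rw [Polynomial.aeval_comp] at h
  simp only [map_add, map_one, Polynomial.aeval_X, map_nsmul, map_pow, Nat.add_sub_cancel] at h
  rw [bpoly, bpoly, h]
  simp

lemma hasseDeriv_bernoulli (m n : ℕ) (hnm : n ≤ m) :
    Polynomial.hasseDeriv n ((Polynomial.bernoulli m).map (algebraMap ℚ ℂ)) =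
      Polynomial.C (m.choose n : ℂ) * (Polynomial.bernoulli (m - n)).map (algebraMap ℚ ℂ) := by
  ext i
  rw [Polynomial.hasseDeriv_coeff, Polynomial.coeff_C_mul, Polynomial.coeff_map,
    Polynomial.coeff_map, Polynomial.coeff_bernoulli, Polynomial.coeff_bernoulli]
  by_cases hi : i + n ≤ m
  · rw [if_pos hi, if_pos (by omega), show m - n - i = m - (i + n) by omega]
    have h := Nat.choose_mul (n := m) (Nat.le_add_left n i)
    rw [Nat.add_sub_cancel] at h
    have h' : (m.choose (i + n) : ℂ) * (i + n).choose n = m.choose n * (m - n).choose i := by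
      exact_mod_cast h
    simp only [map_mul, map_natCast]
    linear_combination (algebraMap ℚ ℂ) (bernoulli (m - (i + n))) * h'
  · rw [if_neg hi, if_neg (by omega)]
    simp

lemma integral_pow_mul_latticeSum {n w : ℕ} (hn : 0 < n) (hnw : n < w) {a : ℝ} (ha0 : 0 < a)
    (ha1 : a < 1) (q : ℂ) :
    I * ∫ y : ℝ, (y * I - q) ^ w * latticeSum n (a + y * I) =
      2 * π * I * (w.choose n * bpoly (w - n + 1) (1 - a - q) / ((w - n + 1 : ℕ) : ℂ)) := by
  have hw1 : ((w : ℂ) + 1) ≠ 0 := by exact_mod_cast w.succ_ne_zero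
  have hm : (((w - n + 1 : ℕ) : ℂ)) ≠ 0 := by exact_mod_cast (w - n).succ_ne_zero
  set R : Polynomial ℂ := Polynomial.C ((w : ℂ) + 1)⁻¹ *
    Polynomial.taylor (1 - a - q) ((Polynomial.bernoulli (w + 1)).map (algebraMap ℚ ℂ)) with hR
  have heval : ∀ s : ℂ, R.eval s = ((w : ℂ) + 1)⁻¹ * bpoly (w + 1) (s + (1 - a - q)) := by
    intro s
    rw [hR, Polynomial.eval_mul, Polynomial.eval_C, Polynomial.taylor_eval, bpoly_eq_eval]
  have hcoeff : R.coeff n =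
      w.choose n * bpoly (w - n + 1) (1 - a - q) / ((w - n + 1 : ℕ) : ℂ) := by
    rw [hR, Polynomial.coeff_C_mul, Polynomial.taylor_coeff, hasseDeriv_bernoulli _ _ (by omega),
      Polynomial.eval_mul, Polynomial.eval_C, ← bpoly_eq_eval,
      show w + 1 - n = w - n + 1 by omega]
    have h := Nat.choose_mul_succ_eq w n
    rw [show w + 1 - n = w - n + 1 by omega] at h
    have h' : (w.choose n : ℂ) * (w + 1) = (w + 1).choose n * ((w - n + 1 : ℕ) : ℂ) := by
      exact_mod_cast h
    field_simp
    linear_combination -bpoly (w - n + 1) (1 - a - q) * h'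
  rw [← hcoeff, ← integral_eval_mul_latticeSum_sub hn R ha0 ha1]
  congr 2
  ext y
  have h := bpoly_one_add_sub w (y * I - q)
  rw [heval, heval, show (a + y * I + (1 - a - q) : ℂ) = 1 + (y * I - q) by ring,
    show (a + y * I - 1 + (1 - a - q) : ℂ) = y * I - q by ring, ← mul_sub, h,
    inv_mul_cancel_left₀ hw1]

lemma integrable_pow_mul_latticeSum {n : ℕ} (hn : 0 < n) (w : ℕ) {a : ℝ} (ha0 : 0 < a)
    (ha1 : a < 1) (p q : ℂ) :
    Integrable fun y : ℝ => (p * (y * I) - q) ^ w * latticeSum n (a + y * I) := by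
  have h : ∀ y : ℝ, (p * (y * I) - q) ^ w * latticeSum n (a + y * I) =
      ∑ j ∈ Finset.range (w + 1), (p ^ j * (-(p * a) - q) ^ (w - j) * w.choose j) *
        ((a + y * I : ℂ) ^ j * latticeSum n (a + y * I)) := by
    intro y
    rw [show (p * (y * I) - q : ℂ) = p * (a + y * I) + (-(p * a) - q) by ring, add_pow,
      Finset.sum_mul]
    exact Finset.sum_congr rfl fun j _ => by rw [mul_pow]; ring
  simp_rw [h]
  exact integrable_finsetSum _ fun j _ =>
    (integrable_pow_mul_latticeSum_vertical hn j ha0.ne' (by rwa [abs_of_pos ha0])).const_mul _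

lemma integral_Ioi_comp_one_div_mul (g : ℝ → ℂ) {K : ℝ} (hK : 0 < K) :
    ∫ y in Set.Ioi (0 : ℝ), (1 / (y : ℂ) ^ 2) * g (1 / (K * y)) =
      K * ∫ t in Set.Ioi (0 : ℝ), g t := by
  have h1 := integral_comp_rpow_Ioi (fun t : ℝ => g (K⁻¹ * t)) (p := -1) (by norm_num)
  have h2 := integral_comp_mul_left_Ioi g 0 (inv_pos.mpr hK)
  rw [mul_zero, inv_inv, Complex.real_smul] at h2
  rw [← h2, ← h1]
  refine setIntegral_congr_fun measurableSet_Ioi fun y hy => ?_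
  have hy' : (0 : ℝ) < y := hy
  have h3 : y ^ (-1 - 1 : ℝ) = 1 / y ^ 2 := by
    rw [show (-1 - 1 : ℝ) = -(2 : ℕ) by norm_num, Real.rpow_neg hy'.le, Real.rpow_natCast,
      one_div]
  simp only [h3, Real.rpow_neg_one, Complex.real_smul, abs_neg, abs_one, one_mul]
  rw [one_div (K * y), mul_inv]
  push_cast
  rfl

lemma S3_mul_pow {N D w n : ℕ} (hN : N ≠ 0) (hD : D ≠ 0) (hnw : n < w) (c : ℤ) (X : ℂ)
    {z : ℂ} (hz : z ≠ 0) :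
    S3 N D w n c z * (X - z) ^ w = 2 / ((D : ℂ) ^ (w + 2) * N ^ (n + 1) * z ^ 2) *
      ((D ^ 2 * N * X * (1 / (D ^ 2 * N * z)) - 1) ^ w *
        latticeSum n (c / D + 1 / (D ^ 2 * N * z))) := by
  have hN' : (N : ℂ) ≠ 0 := by exact_mod_cast hN
  have hD' : (D : ℂ) ≠ 0 := by exact_mod_cast hD
  have h1 : S3 N D w n c z = 2 * (1 / (((D : ℂ) * z) ^ (w - n + 1) * (D * N * z) ^ (n + 1)) *
      latticeSum n (c / D + 1 / (D ^ 2 * N * z))) := by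
    unfold S3 latticeSum
    refine congrArg (2 * ·) (Eq.trans (tsum_congr fun k => ?_) tsum_mul_left)
    rw [show (((c : ℂ) + k * D) * N * z + 1 / D) =
      (D * N * z) * (c / D + 1 / (D ^ 2 * N * z) + k) by field_simp; ring,
      mul_pow _ (c / D + 1 / (D ^ 2 * N * z) + k : ℂ), div_mul_div_comm, one_mul,
      mul_assoc (_ ^ (w - n + 1))]
  have h2 : (X - z) ^ w = z ^ w * (D ^ 2 * N * X * (1 / (D ^ 2 * N * z)) - 1) ^ w := by
    rw [← mul_pow]
    congr 1
    field_simp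
  have h3 : ((D : ℂ) * z) ^ (w - n + 1) * (D * N * z) ^ (n + 1) =
      D ^ (w + 2) * N ^ (n + 1) * z ^ 2 * z ^ w := by
    obtain ⟨m, rfl⟩ := Nat.exists_eq_add_of_lt hnw
    rw [show n + m + 1 - n + 1 = m + 2 by omega]
    ring
  rw [h1, h2, h3]
  have := pow_ne_zero w hz
  field_simp

lemma fract_div_pos {N D : ℕ} (hD : 1 < D) {c h : ℤ} (hc : (D : ℤ) ∣ (c * N * h - 1)) :
    0 < Int.fract ((c : ℝ) / D) := by
  refine lt_of_le_of_ne (Int.fract_nonneg _) fun h0 => ?_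
  obtain ⟨m, hm⟩ := Int.fract_eq_zero_iff.mp h0.symm
  have hD0 : (D : ℝ) ≠ 0 := by positivity
  have h1 : (c : ℝ) = m * D := by rw [hm, div_mul_cancel₀ _ hD0]
  have h2 : c = m * D := by exact_mod_cast h1
  have h3 : (D : ℤ) ∣ 1 := by
    have h4 : (D : ℤ) ∣ c * N * h := ⟨m * N * h, by rw [h2]; ring⟩
    simpa using dvd_sub h4 hc
  have := Int.le_of_dvd one_pos h3
  omega

lemma cconst_mul {w n : ℕ} (hn : 0 < n) :
    cconst w n * (-1) ^ (n - 1) * (2 * I) ^ (w + 1) = -(4 * π * I * w.choose n) := by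
  have h2I : (2 * I : ℂ) ≠ 0 := by simp
  have h1 : (2 * I : ℂ) ^ (-(w : ℤ) - 1) * (2 * I) ^ (w + 1) = 1 := by
    rw [← zpow_natCast, ← zpow_add₀ h2I]
    simp
  have h2 : (-1 : ℂ) ^ n * (-1) ^ (n - 1) = -1 := by
    rw [← pow_add]
    exact Odd.neg_one_pow ⟨n - 1, by omega⟩
  unfold cconst
  linear_combination ((-1) ^ n * (-1) ^ (n - 1) * 4 * π * I * w.choose n) * h1 +
    (4 * π * I * w.choose n) * h2

/-- the twisted period-polynomial contribution of the matrices with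
top row `±(D, −h)` (for `gcd(N,D) = 1`): for `0 < n < w`, `gcd(h,D) = 1`, `cNh ≡ 1 (mod D)`,
and nonzero `X`,
`F_{3,h}(X) = c_n·(−1)^{n−1}·(2i)^{w+1}·N^{ñ}·D^w·X^w·B_{ñ+1}({−c/D} − 1/(D²NX))/(ñ+1)`. -/
theorem F3_eval (N : ℕ) (hN : 1 ≤ N) (w : ℕ) (hw : 2 ≤ w) (hwe : Even w)
    (n : ℕ) (hn0 : 0 < n) (hnw : n < w) (D : ℕ) (hD : 1 < D) (hND : Nat.gcd N D = 1)
    (h : ℤ) (hh : Int.gcd h D = 1) (c : ℤ) (hc : (D : ℤ) ∣ (c * N * h - 1))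
    (X : ℂ) (hX : X ≠ 0) :
    intI (fun z => S3 N D w n c z * (X - z) ^ w) +
      (-1 : ℂ) ^ (n - 1) * intI (fun z => S3 N D w n (-c) z * (X + z) ^ w) =
    cconst w n * (-1) ^ (n - 1) * (2 * Complex.I) ^ (w + 1) * (N : ℂ) ^ (w - n) *
      (D : ℂ) ^ w * X ^ w *
      bpoly (w - n + 1) (((Int.fract (-(c : ℝ) / D) : ℝ) : ℂ) - 1 / (D ^ 2 * N * X)) /
      (w - n + 1) := by
  have hN' : (N : ℂ) ≠ 0 := by exact_mod_cast (by omega : N ≠ 0)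
  have hD' : (D : ℂ) ≠ 0 := by exact_mod_cast (by omega : D ≠ 0)
  set α : ℝ := Int.fract ((c : ℝ) / D) with hα
  have hα0 : 0 < α := fract_div_pos hD hc
  have hα1 : α < 1 := Int.fract_lt_one _
  have hfr : Int.fract (-(c : ℝ) / D) = 1 - α := by
    rw [neg_div, Int.fract_neg hα0.ne']
  have hcD : (c : ℂ) / D = α + (⌊(c : ℝ) / D⌋ : ℤ) := by
    have h1 : (c : ℝ) / D = α + (⌊(c : ℝ) / D⌋ : ℤ) := (Int.fract_add_floor _).symm
    exact_mod_cast congrArg (fun x : ℝ => (x : ℂ)) h1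
  have hper : ∀ v : ℂ, latticeSum n (c / D + v) = latticeSum n (α + v) := by
    intro v
    rw [hcD, add_right_comm, latticeSum_add_int]
  set K : ℝ := D ^ 2 * N with hK
  have hK0 : 0 < K := by
    have h1 : (0 : ℝ) < D := by exact_mod_cast (by omega : 0 < D)
    have h2 : (0 : ℝ) < N := by exact_mod_cast hN
    positivity
  have hKC : (D : ℂ) ^ 2 * N = K := by rw [hK]; push_cast; rfl
  have hKC0 : (K : ℂ) ≠ 0 := by exact_mod_cast hK0.ne'
  set A : ℂ := 2 / ((D : ℂ) ^ (w + 2) * N ^ (n + 1)) with hA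
  set g : ℝ → ℂ := fun t => (K * X * (t * I) - 1) ^ w * latticeSum n (α + t * I) with hg
  have hint : Integrable g := integrable_pow_mul_latticeSum hn0 w hα0 hα1 (K * X) 1
  have hz : ∀ y : ℝ, 0 < y → (I * y : ℂ) ≠ 0 := fun y hy =>
    mul_ne_zero I_ne_zero (by exact_mod_cast hy.ne')
  have hinv : ∀ y : ℝ, 0 < y → 1 / (K * (I * y) : ℂ) = -((1 / (K * y) : ℝ) * I) := by
    intro y hy
    have hy' : (y : ℂ) ≠ 0 := by exact_mod_cast hy.ne'
    have := I_ne_zero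
    push_cast
    field_simp
    simp
  have hpre : ∀ y : ℝ, 0 < y →
      2 / ((D : ℂ) ^ (w + 2) * N ^ (n + 1) * (I * y) ^ 2) = -A * (1 / (y : ℂ) ^ 2) := by
    intro y hy
    have hy' : (y : ℂ) ≠ 0 := by exact_mod_cast hy.ne'
    rw [hA, mul_pow, I_sq]
    field_simp
  have hfirst : ∀ y : ℝ, 0 < y → S3 N D w n c (I * y) * (X - I * y) ^ w =
      -A * (1 / (y : ℂ) ^ 2 * g (-(1 / (K * y)))) := by
    intro y hy
    rw [S3_mul_pow (by omega) (by omega) hnw c X (hz y hy), hKC, hinv y hy, hpre y hy, hper, hg]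
    push_cast
    ring_nf
  have hsecond : ∀ y : ℝ, 0 < y → S3 N D w n (-c) (I * y) * (X + I * y) ^ w =
      -A * (-1) ^ (n + 1) * (1 / (y : ℂ) ^ 2 * g (1 / (K * y))) := by
    intro y hy
    have h1 : (X + I * y) ^ w = (-X - I * y) ^ w := by
      rw [← hwe.neg_pow]; congr 1; ring
    rw [h1, S3_mul_pow (by omega) (by omega) hnw (-c) (-X) (hz y hy), hKC, hinv y hy, hpre y hy,
      show (((-c : ℤ) : ℂ) / D + -((1 / (K * y) : ℝ) * I)) =
        -(c / D + (1 / (K * y) : ℝ) * I) by push_cast; ring, latticeSum_neg, hper, hg]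
    ring_nf
  have hI1 : intI (fun z => S3 N D w n c z * (X - z) ^ w) =
      I * (-A * (K * ∫ t in Set.Iic (0 : ℝ), g t)) := by
    unfold intI
    rw [setIntegral_congr_fun measurableSet_Ioi fun y hy => hfirst y hy, integral_const_mul,
      integral_Ioi_comp_one_div_mul (fun t => g (-t)) hK0, integral_comp_neg_Ioi, neg_zero]
  have hI2 : intI (fun z => S3 N D w n (-c) z * (X + z) ^ w) =
      I * (-A * (-1) ^ (n + 1) * (K * ∫ t in Set.Ioi (0 : ℝ), g t)) := by
    unfold intI
    rw [setIntegral_congr_fun measurableSet_Ioi fun y hy => hsecond y hy, integral_const_mul,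
      integral_Ioi_comp_one_div_mul g hK0]
  have hsign : (-1 : ℂ) ^ (n - 1) * (-1) ^ (n + 1) = 1 := by
    rw [← pow_add]
    exact Even.neg_one_pow ⟨n, by omega⟩
  have hsplit : (∫ t in Set.Iic (0 : ℝ), g t) + ∫ t in Set.Ioi (0 : ℝ), g t = ∫ t, g t :=
    intervalIntegral.integral_Iic_add_Ioi hint.integrableOn hint.integrableOn
  have hgi : I * ∫ t, g t = (K * X) ^ w * (2 * π * I * (w.choose n *
      bpoly (w - n + 1) (1 - α - 1 / (K * X)) / ((w - n + 1 : ℕ) : ℂ))) := by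
    rw [← integral_pow_mul_latticeSum hn0 hnw hα0 hα1, mul_left_comm,
      ← integral_const_mul ((K * X : ℂ) ^ w)]
    refine congrArg (I * ·) (integral_congr_ae (Filter.Eventually.of_forall fun t => ?_))
    simp only [hg]
    rw [← mul_assoc ((K * X : ℂ) ^ w), ← mul_pow]
    congr 2
    field_simp
  have hAK : A * K * (K * X) ^ w = 2 * N ^ (w - n) * D ^ w * X ^ w := by
    obtain ⟨m, rfl⟩ := Nat.exists_eq_add_of_lt hnw
    rw [hA, ← hKC, show n + m + 1 - n = m + 1 by omega]
    field_simp
    ring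
  have hcast : ((w - n + 1 : ℕ) : ℂ) = w - n + 1 := by
    push_cast [Nat.cast_sub hnw.le]; rfl
  rw [hI1, hI2, cconst_mul hn0, hfr, hKC, ← hcast]
  push_cast [hcast]
  calc _ = -(A * K) * (I * ((∫ t in Set.Iic (0 : ℝ), g t) + (-1 : ℂ) ^ (n - 1) * (-1) ^ (n + 1) *
        ∫ t in Set.Ioi (0 : ℝ), g t)) := by ring
    _ = -(A * K * (K * X) ^ w) * (2 * π * I * (w.choose n *
        bpoly (w - n + 1) (1 - α - 1 / (K * X)) / (w - n + 1))) := by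
      rw [hsign, one_mul, hsplit, hgi, hcast]
      ring
    _ = _ := by
      rw [hAK]
      ring

end
end

section
/- Let N ≥ 1, let w ≥ 2 be even, let n be an integer with 0 < n < w, set ñ = w − n, let D > 1 and let h be an integer. Let S_{6,h}(z) = Σ_{(a b; c d) ∈ Γ₀(N), ac(ah/D+b)(ch/D+d) > 0} 1/((az + ah/D + b)^{ñ+1}·(cz + ch/D + d)^{n+1}). Then for every integer m with 0 < m < w: ∫_{−i∞}^{i∞} S_{6,h}(z)·z^m dz = 0. -/
open MeasureTheory Complex Real

noncomputable section

/-- `S_{6,h}(z)`: the sub-sum of the series defining `R_n` over matrices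
`(a b; c d) ∈ Γ₀(N)` with `ac(ah/D+b)(ch/D+d) > 0`. -/
def S6 (N D w n : ℕ) (h : ℤ) (z : ℂ) : ℂ :=
  ∑' p : ℤ × ℤ × ℤ × ℤ,
    if p.1 * p.2.2.2 - p.2.1 * p.2.2.1 = 1 ∧ (N : ℤ) ∣ p.2.2.1 ∧
        0 < (p.1 : ℝ) * p.2.2.1 * ((p.1 : ℝ) * h / D + p.2.1) *
          ((p.2.2.1 : ℝ) * h / D + p.2.2.2) then
      1 / (((p.1 : ℂ) * z + (p.1 : ℂ) * h / D + p.2.1) ^ (w - n + 1) *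
          ((p.2.2.1 : ℂ) * z + (p.2.2.1 : ℂ) * h / D + p.2.2.2) ^ (n + 1))
    else 0

/-- A function holomorphic on the closed right half-plane which decays like `‖z‖⁻²` there has
vanishing integral along the imaginary axis. -/
theorem integral_imaginary_axis_eq_zero {f : ℂ → ℂ} {C : ℝ}
    (hd : DifferentiableOn ℂ f {z | 0 ≤ z.re})
    (hC : ∀ z : ℂ, 0 ≤ z.re → 1 ≤ ‖z‖ → ‖f z‖ ≤ C / ‖z‖ ^ 2)
    (hi : Integrable fun t : ℝ => f (I * t)) : ∫ t : ℝ, f (I * t) = 0 := by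
  have hC0 : 0 ≤ C := by
    have := (norm_nonneg _).trans (hC 1 (by simp) (by simp))
    simpa using this
  have key : ∀ R : ℝ, 1 ≤ R → ‖∫ t in (-R)..R, f (I * t)‖ ≤ 4 * C / R := by
    intro R hR
    have hR0 : 0 < R := by linarith
    have bound : ∀ z : ℂ, 0 ≤ z.re → R ≤ ‖z‖ → ‖f z‖ ≤ C / R ^ 2 := fun z hz hRz =>
      (hC z hz (hR.trans hRz)).trans (by gcongr)
    have hrect := integral_boundary_rect_eq_zero_of_differentiableOn f
      (⟨0, -R⟩ : ℂ) (⟨R, R⟩ : ℂ) (hd.mono (by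
        intro z hz
        have := hz.1
        simp only [Set.mem_preimage, Set.uIcc_of_le hR0.le] at this
        exact this.1))
    simp only at hrect
    have h1 : ‖∫ x : ℝ in (0:ℝ)..R, f (x + (-R : ℝ) * I)‖ ≤ C / R ^ 2 * |R - 0| := by
      refine intervalIntegral.norm_integral_le_of_norm_le_const fun x hx => ?_
      rw [Set.uIoc_of_le hR0.le] at hx
      refine bound _ (by simpa using hx.1.le) ?_
      refine le_trans ?_ (abs_im_le_norm _)
      simp [abs_of_pos hR0]
    have h2 : ‖∫ x : ℝ in (0:ℝ)..R, f (x + (R : ℝ) * I)‖ ≤ C / R ^ 2 * |R - 0| := by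
      refine intervalIntegral.norm_integral_le_of_norm_le_const fun x hx => ?_
      rw [Set.uIoc_of_le hR0.le] at hx
      refine bound _ (by simpa using hx.1.le) ?_
      refine le_trans ?_ (abs_im_le_norm _)
      simp [abs_of_pos hR0]
    have h3 : ‖∫ t : ℝ in (-R)..R, f ((R : ℝ) + t * I)‖ ≤ C / R ^ 2 * |R - -R| := by
      refine intervalIntegral.norm_integral_le_of_norm_le_const fun x hx => ?_
      refine bound _ (by simpa using hR0.le) ?_
      refine le_trans ?_ (abs_re_le_norm _)
      simp [abs_of_pos hR0]
    have h4 : ∫ t : ℝ in (-R)..R, f ((0 : ℝ) + t * I) = ∫ t : ℝ in (-R)..R, f (I * t) := by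
      simp [mul_comm]
    rw [h4] at hrect
    have h5 : ‖I • ∫ t in (-R)..R, f (I * t)‖ ≤
        C / R ^ 2 * |R - 0| + C / R ^ 2 * |R - 0| + C / R ^ 2 * |R - -R| := by
      rw [← sub_eq_zero.mp hrect]
      refine norm_add_le_of_le (norm_sub_le_of_le h1 h2) ?_
      rw [norm_smul, norm_I, one_mul]
      exact h3
    rw [norm_smul, norm_I, one_mul] at h5
    refine h5.trans (le_of_eq ?_)
    rw [sub_zero, abs_of_pos hR0, abs_of_pos (by linarith : (0:ℝ) < R - -R)]
    field_simp
    ring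
  have hlim := intervalIntegral_tendsto_integral hi Filter.tendsto_neg_atTop_atBot Filter.tendsto_id
  refine tendsto_nhds_unique hlim ?_
  refine squeeze_zero_norm' (a := fun R : ℝ => 4 * C / R) ?_
    (tendsto_const_nhds.div_atTop Filter.tendsto_id)
  filter_upwards [Filter.eventually_ge_atTop 1] with R hR using key R hR

theorem norm_mul_add_sq (a x : ℝ) (z : ℂ) :
    ‖(a : ℂ) * z + x‖ ^ 2 = a ^ 2 * ‖z‖ ^ 2 + 2 * (a * x * z.re) + x ^ 2 := by
  rw [← normSq_eq_norm_sq, ← normSq_eq_norm_sq, normSq_apply, normSq_apply]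
  simp
  ring

theorem abs_mul_norm_le_norm_mul_add {a x : ℝ} {z : ℂ} (h : 0 ≤ a * x * z.re) :
    |a| * ‖z‖ ≤ ‖(a : ℂ) * z + x‖ := by
  refine le_of_sq_le_sq ?_ (norm_nonneg _)
  rw [norm_mul_add_sq, mul_pow, sq_abs]
  nlinarith [sq_nonneg x]

theorem abs_le_norm_mul_add {a x : ℝ} {z : ℂ} (h : 0 ≤ a * x * z.re) :
    |x| ≤ ‖(a : ℂ) * z + x‖ := by
  refine le_of_sq_le_sq ?_ (norm_nonneg _)
  rw [norm_mul_add_sq, sq_abs]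
  nlinarith [mul_nonneg (sq_nonneg a) (sq_nonneg ‖z‖)]

/-- The summand of `S6`, with real parameters, multiplied by `z ^ m`. -/
def seriesTerm (r n m : ℕ) (a x c y : ℝ) (z : ℂ) : ℂ :=
  z ^ m / (((a : ℂ) * z + x) ^ (r + 1) * ((c : ℂ) * z + y) ^ (n + 1))

theorem integral_seriesTerm_eq_zero_of_pos {r n m : ℕ} (hm : m ≤ r + n) {a x c y : ℝ}
    (hax : 0 < a * x) (hcy : 0 < c * y)
    (hi : Integrable fun t : ℝ => seriesTerm r n m a x c y (I * t)) :
    ∫ t : ℝ, seriesTerm r n m a x c y (I * t) = 0 := by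
  have ha : 0 < |a| := abs_pos.mpr (left_ne_zero_of_mul hax.ne')
  have hx : 0 < |x| := abs_pos.mpr (right_ne_zero_of_mul hax.ne')
  have hc : 0 < |c| := abs_pos.mpr (left_ne_zero_of_mul hcy.ne')
  have hy : 0 < |y| := abs_pos.mpr (right_ne_zero_of_mul hcy.ne')
  refine integral_imaginary_axis_eq_zero (C := 1 / (|a| ^ (r + 1) * |c| ^ (n + 1))) ?_ ?_ hi
  · intro z hz
    have h1 : (a : ℂ) * z + x ≠ 0 := norm_pos_iff.mp
      (hx.trans_le (abs_le_norm_mul_add (mul_nonneg hax.le hz)))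
    have h2 : (c : ℂ) * z + y ≠ 0 := norm_pos_iff.mp
      (hy.trans_le (abs_le_norm_mul_add (mul_nonneg hcy.le hz)))
    refine DifferentiableAt.differentiableWithinAt ?_
    unfold seriesTerm
    exact DifferentiableAt.div (by fun_prop) (by fun_prop)
      (mul_ne_zero (pow_ne_zero _ h1) (pow_ne_zero _ h2))
  · intro z hz hz1
    have hz0 : 0 < ‖z‖ := by linarith
    have h1 := abs_mul_norm_le_norm_mul_add (mul_nonneg hax.le hz)
    have h2 := abs_mul_norm_le_norm_mul_add (mul_nonneg hcy.le hz)
    unfold seriesTerm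
    rw [norm_div, norm_mul, norm_pow, norm_pow, norm_pow]
    calc ‖z‖ ^ m / (‖(a : ℂ) * z + x‖ ^ (r + 1) * ‖(c : ℂ) * z + y‖ ^ (n + 1))
        ≤ ‖z‖ ^ (r + n) / ((|a| * ‖z‖) ^ (r + 1) * (|c| * ‖z‖) ^ (n + 1)) := by
          gcongr
      _ = _ := by
          field_simp
          ring

theorem integral_seriesTerm_eq_zero {r n m : ℕ} (hm : m ≤ r + n) {a x c y : ℝ}
    (h : 0 < (a * x) * (c * y))
    (hi : Integrable fun t : ℝ => seriesTerm r n m a x c y (I * t)) :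
    ∫ t : ℝ, seriesTerm r n m a x c y (I * t) = 0 := by
  rcases pos_and_pos_or_neg_and_neg_of_mul_pos h with ⟨h1, h2⟩ | ⟨h1, h2⟩
  · exact integral_seriesTerm_eq_zero_of_pos hm h1 h2 hi
  · have hneg : (fun t : ℝ => seriesTerm r n m (-a) x (-c) y (I * t)) =
        fun t : ℝ => (-1) ^ m * seriesTerm r n m a x c y (I * (-t : ℝ)) := by
      funext t
      have e : (I * t) ^ m = (-1) ^ m * (I * (-t : ℝ)) ^ m := by
        rw [← mul_pow]; push_cast; ring
      unfold seriesTerm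
      rw [e, mul_div_assoc]
      push_cast
      ring_nf
    have hi' : Integrable fun t : ℝ => seriesTerm r n m (-a) x (-c) y (I * t) := by
      rw [hneg]
      exact hi.comp_neg.const_mul _
    have h0 := integral_seriesTerm_eq_zero_of_pos hm (by linarith) (by linarith) hi'
    rw [hneg, integral_const_mul,
      integral_neg_eq_self (fun t : ℝ => seriesTerm r n m a x c y (I * t))] at h0
    simpa using h0

theorem integrable_inv_sq_mul_sq_add_sq {a x : ℝ} (ha : a ≠ 0) (hx : x ≠ 0) :
    Integrable fun t : ℝ => (a ^ 2 * t ^ 2 + x ^ 2)⁻¹ := by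
  have h := (integrable_inv_one_add_sq.comp_mul_left' (div_ne_zero ha hx)).const_mul (x ^ 2)⁻¹
  refine h.congr (.of_forall fun t => ?_)
  dsimp only
  rw [← mul_inv]
  congr 1
  field_simp
  ring

theorem integral_inv_sq_mul_sq_add_sq {a x : ℝ} (ha : a ≠ 0) (hx : x ≠ 0) :
    ∫ t : ℝ, (a ^ 2 * t ^ 2 + x ^ 2)⁻¹ = π / (|a| * |x|) := by
  have h := Measure.integral_comp_mul_left (fun t : ℝ => (1 + t ^ 2)⁻¹) (a / x)
  rw [integral_univ_inv_one_add_sq] at h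
  have e : (fun t : ℝ => (a ^ 2 * t ^ 2 + x ^ 2)⁻¹) =
      fun t : ℝ => (x ^ 2)⁻¹ * (1 + (a / x * t) ^ 2)⁻¹ := by
    funext t
    rw [← mul_inv]
    congr 1
    field_simp
    ring
  rw [e, integral_const_mul, h, ← sq_abs x, inv_div, abs_div, smul_eq_mul]
  have := abs_pos.mpr ha
  have := abs_pos.mpr hx
  field_simp

/-- Pointwise bound on the imaginary axis for the summands. -/
theorem norm_seriesTerm_le {r n m : ℕ} (hm0 : 0 < m) (hm : m < r + n) (hr : 0 < r) (hn : 0 < n)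
    {a x c y δ κ : ℝ} (ha : 1 ≤ |a|) (hc : 1 ≤ |c|) (hδ : 0 < δ) (hδ1 : δ ≤ 1)
    (hx : δ ≤ |x|) (hy : δ ≤ |y|) (hκ : 1 ≤ κ) (hxy : |c * x| ≤ κ * |a * y|) (t : ℝ) :
    ‖seriesTerm r n m a x c y (I * t)‖ ≤
      κ / (δ ^ (r + n) * (|c| * |y|)) * (a ^ 2 * t ^ 2 + x ^ 2)⁻¹ := by
  have hax : 0 ≤ a * x * (I * t : ℂ).re := by simp
  have hcy : 0 ≤ c * y * (I * t : ℂ).re := by simp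
  have hnt : ‖(I * t : ℂ)‖ = |t| := by simp
  have h1 := abs_mul_norm_le_norm_mul_add hax
  have h2 := abs_mul_norm_le_norm_mul_add hcy
  have h3 := abs_le_norm_mul_add hax
  have h4 := abs_le_norm_mul_add hcy
  have h5 := norm_mul_add_sq a x (I * t)
  have h6 := norm_mul_add_sq c y (I * t)
  unfold seriesTerm
  rw [norm_div, norm_mul, norm_pow, norm_pow, norm_pow]
  rw [hnt] at *
  set α := ‖(a : ℂ) * (I * t) + x‖
  set β := ‖(c : ℂ) * (I * t) + y‖
  have h5' : a ^ 2 * t ^ 2 + x ^ 2 = α ^ 2 := by rw [h5]; simp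
  have h6' : c ^ 2 * t ^ 2 + y ^ 2 = β ^ 2 := by rw [h6]; simp
  rw [h5']
  have hα : 0 < α := by linarith
  have hβ : 0 < β := by linarith
  have hcomp : |c| * α ≤ κ * |a| * β := by
    refine le_of_sq_le_sq ?_ (by positivity)
    rw [mul_pow, mul_pow, mul_pow, ← h5', ← h6', sq_abs, sq_abs]
    have e1 : (c * x) ^ 2 ≤ κ ^ 2 * (a * y) ^ 2 := by
      have := pow_le_pow_left₀ (abs_nonneg _) hxy 2
      rwa [mul_pow, sq_abs, sq_abs] at this
    have e2 : (1 : ℝ) ≤ κ ^ 2 := one_le_pow₀ hκ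
    nlinarith [mul_nonneg (sub_nonneg.mpr e2) (sq_nonneg (a * c * t))]
  obtain ⟨i, j, i', j', hij, hr', hn'⟩ : ∃ i j i' j' : ℕ, (i + 1) + j = m ∧
      r = (i + 1) + i' ∧ n = j + (j' + 1) := by
    by_cases hmr : m ≤ r
    · exact ⟨m - 1, 0, r - m, n - 1, by omega, by omega, by omega⟩
    · exact ⟨r - 1, m - r, 0, n - (m - r) - 1, by omega, by omega, by omega⟩
  have hmain : |t| ^ m * (|a| * |y| * δ ^ (r + n)) ≤ α ^ r * β ^ n := by
    have hδj : δ ^ (r + n) ≤ δ ^ i' * δ ^ j' := by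
      rw [← pow_add]
      exact pow_le_pow_of_le_one hδ.le hδ1 (by omega)
    calc |t| ^ m * (|a| * |y| * δ ^ (r + n))
        ≤ |t| ^ m * (|a| * |y| * (δ ^ i' * δ ^ j')) := by gcongr
      _ = (|a| * |t| ^ (i + 1) * δ ^ i') * (1 * |t| ^ j * (δ ^ j' * |y|)) := by
          rw [← hij, pow_add]; ring
      _ ≤ (|a| ^ (i + 1) * |t| ^ (i + 1) * |x| ^ i') * (|c| ^ j * |t| ^ j * (|y| ^ j' * |y|)) := by
          gcongr
          · exact le_self_pow₀ ha (by omega)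
          · exact one_le_pow₀ hc
      _ = ((|a| * |t|) ^ (i + 1) * |x| ^ i') * ((|c| * |t|) ^ j * |y| ^ (j' + 1)) := by ring
      _ ≤ (α ^ (i + 1) * α ^ i') * (β ^ j * β ^ (j' + 1)) := by gcongr
      _ = α ^ r * β ^ n := by rw [← pow_add, ← pow_add, ← hr', ← hn']
  have hy0 : 0 < |y| := by linarith
  have ha0 : 0 < |a| := by linarith
  have hc0 : 0 < |c| := by linarith
  rw [div_le_iff₀ (by positivity), ← div_eq_mul_inv, div_div, div_mul_eq_mul_div,
    le_div_iff₀ (by positivity)]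
  refine le_of_mul_le_mul_left ?_ (mul_pos ha0 hα)
  calc |a| * α * (|t| ^ m * (δ ^ (r + n) * (|c| * |y|) * α ^ 2))
      = |t| ^ m * (|a| * |y| * δ ^ (r + n)) * (|c| * α) * α ^ 2 := by ring
    _ ≤ α ^ r * β ^ n * (κ * |a| * β) * α ^ 2 := by gcongr
    _ = _ := by ring

theorem integrable_seriesTerm {r n m : ℕ} (hm0 : 0 < m) (hm : m < r + n) (hr : 0 < r)
    (hn : 0 < n) {a x c y δ κ : ℝ} (ha : 1 ≤ |a|) (hc : 1 ≤ |c|) (hδ : 0 < δ) (hδ1 : δ ≤ 1)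
    (hx : δ ≤ |x|) (hy : δ ≤ |y|) (hκ : 1 ≤ κ) (hxy : |c * x| ≤ κ * |a * y|) :
    Integrable fun t : ℝ => seriesTerm r n m a x c y (I * t) := by
  have ha0 : a ≠ 0 := abs_pos.mp (by linarith)
  have hx0 : x ≠ 0 := abs_pos.mp (by linarith)
  refine ((integrable_inv_sq_mul_sq_add_sq ha0 hx0).const_mul _).mono' ?_
    (.of_forall (norm_seriesTerm_le hm0 hm hr hn ha hc hδ hδ1 hx hy hκ hxy))
  refine Measurable.aestronglyMeasurable ?_
  unfold seriesTerm
  fun_prop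

theorem integral_norm_seriesTerm_le {r n m : ℕ} (hm0 : 0 < m) (hm : m < r + n) (hr : 0 < r)
    (hn : 0 < n) {a x c y δ κ : ℝ} (ha : 1 ≤ |a|) (hc : 1 ≤ |c|) (hδ : 0 < δ) (hδ1 : δ ≤ 1)
    (hx : δ ≤ |x|) (hy : δ ≤ |y|) (hκ : 1 ≤ κ) (hxy : |c * x| ≤ κ * |a * y|) :
    ∫ t : ℝ, ‖seriesTerm r n m a x c y (I * t)‖ ≤
      κ * π / δ ^ (r + n) * (1 / (|a * y| * |c * x|)) := by
  have ha0 : a ≠ 0 := abs_pos.mp (by linarith)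
  have hx0 : x ≠ 0 := abs_pos.mp (by linarith)
  refine (integral_mono (integrable_seriesTerm hm0 hm hr hn ha hc hδ hδ1 hx hy hκ hxy).norm
    ((integrable_inv_sq_mul_sq_add_sq ha0 hx0).const_mul _)
    (norm_seriesTerm_le hm0 hm hr hn ha hc hδ hδ1 hx hy hκ hxy)).trans (le_of_eq ?_)
  rw [integral_const_mul, integral_inv_sq_mul_sq_add_sq ha0 hx0, abs_mul, abs_mul]
  have := abs_pos.mpr ha0
  have := abs_pos.mpr hx0
  have : 0 < |c| := by linarith
  have : 0 < |y| := by linarith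
  field_simp

theorem one_div_mul_le_rpow {P Q s κ : ℝ} (hP : 0 < P) (hs : 0 < s) (hκ : 1 ≤ κ)
    (hPQ : P ≤ κ * Q) (hsQ : s ^ 2 ≤ Q) :
    1 / (P * Q) ≤ κ * (P ^ (-(4 / 3 : ℝ)) * s ^ (-(4 / 3 : ℝ))) := by
  have hQ : 0 < Q := lt_of_lt_of_le (by positivity) hsQ
  have e1 : P ^ (1 / 3 : ℝ) ≤ κ * Q ^ (1 / 3 : ℝ) := by
    calc P ^ (1 / 3 : ℝ) ≤ (κ * Q) ^ (1 / 3 : ℝ) := by gcongr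
      _ = κ ^ (1 / 3 : ℝ) * Q ^ (1 / 3 : ℝ) := Real.mul_rpow (by linarith) hQ.le
      _ ≤ κ ^ (1 : ℝ) * Q ^ (1 / 3 : ℝ) := by
        gcongr
        norm_num
      _ = _ := by rw [Real.rpow_one]
  have e2 : s ^ (4 / 3 : ℝ) ≤ Q ^ (2 / 3 : ℝ) := by
    calc s ^ (4 / 3 : ℝ) = (s ^ 2) ^ (2 / 3 : ℝ) := by
          rw [← Real.rpow_natCast, ← Real.rpow_mul hs.le]; norm_num
      _ ≤ _ := by gcongr
  have e3 : P ^ (4 / 3 : ℝ) = P * P ^ (1 / 3 : ℝ) := by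
    rw [← Real.rpow_one_add' hP.le (by norm_num)]; norm_num
  have e4 : Q = Q ^ (1 / 3 : ℝ) * Q ^ (2 / 3 : ℝ) := by
    rw [← Real.rpow_add hQ]; norm_num
  rw [Real.rpow_neg hP.le, Real.rpow_neg hs.le, ← mul_inv, ← div_eq_mul_inv,
    div_le_div_iff₀ (by positivity) (by positivity), one_mul, e3]
  calc P * P ^ (1 / 3 : ℝ) * s ^ (4 / 3 : ℝ)
      ≤ P * (κ * Q ^ (1 / 3 : ℝ)) * Q ^ (2 / 3 : ℝ) := by gcongr
    _ = κ * (P * (Q ^ (1 / 3 : ℝ) * Q ^ (2 / 3 : ℝ))) := by ring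
    _ = κ * (P * Q) := by rw [← e4]

theorem abs_le_mul_abs_of_sub_eq {P Q : ℤ} {D : ℕ} (h : P - Q = D) (hQ : Q ≠ 0) :
    |(P : ℝ)| ≤ (D + 1) * |(Q : ℝ)| := by
  have h1 : (1 : ℝ) ≤ |(Q : ℝ)| := by exact_mod_cast Int.one_le_abs hQ
  have h2 : (P : ℝ) = Q + D := by
    have : (P : ℝ) - Q = D := by exact_mod_cast h
    linarith
  have hD : (0 : ℝ) ≤ D := by positivity
  calc |(P : ℝ)| ≤ |(Q : ℝ)| + D := by
        rw [h2]; exact (abs_add_le _ _).trans (by rw [abs_of_nonneg hD])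
    _ ≤ _ := by nlinarith

/-- The sum of `1 / |A Y C X|` over the nonzero integer solutions of `A Y - C X = D` converges. -/
theorem summable_one_div_of_sub_eq (D : ℕ) :
    Summable fun q : {q : ℤ × ℤ × ℤ × ℤ // q.1 * q.2.1 - q.2.2.1 * q.2.2.2 = D ∧
        q.1 * q.2.1 ≠ 0 ∧ q.2.2.1 * q.2.2.2 ≠ 0} =>
      1 / (|(q.1.1 : ℝ) * q.1.2.1| * |(q.1.2.2.1 : ℝ) * q.1.2.2.2|) := by
  set g : ℤ → ℝ := fun k => |(k : ℝ)| ^ (-(4 / 3 : ℝ)) with hg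
  have hg0 : ∀ k, 0 ≤ g k := fun k => by positivity
  have hgs : Summable g := Real.summable_abs_int_rpow (by norm_num)
  have hG : Summable fun p : ℤ × ℤ × ℤ => g p.1 * (g p.2.1 * g p.2.2) :=
    hgs.mul_of_nonneg (g := fun p : ℤ × ℤ => g p.1 * g p.2)
      (hgs.mul_of_nonneg hgs hg0 hg0) hg0 (fun p => mul_nonneg (hg0 _) (hg0 _))
  set S := {q : ℤ × ℤ × ℤ × ℤ // q.1 * q.2.1 - q.2.2.1 * q.2.2.2 = D ∧
        q.1 * q.2.1 ≠ 0 ∧ q.2.2.1 * q.2.2.2 ≠ 0}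
  have i1 : Function.Injective fun q : S => (q.1.1, q.1.2.1, q.1.2.2.1) := by
    rintro ⟨⟨A, Y, C, X⟩, h1, h2, h3⟩ ⟨⟨A', Y', C', X'⟩, h1', h2', h3'⟩ h
    simp only [Prod.mk.injEq] at h
    obtain ⟨rfl, rfl, rfl⟩ := h
    simp only at h1 h1' h3
    have : X = X' := mul_left_cancel₀ (left_ne_zero_of_mul h3) (by linarith)
    rw [Subtype.mk.injEq, this]
  have i2 : Function.Injective fun q : S => (q.1.1, q.1.2.1, q.1.2.2.2) := by
    rintro ⟨⟨A, Y, C, X⟩, h1, h2, h3⟩ ⟨⟨A', Y', C', X'⟩, h1', h2', h3'⟩ h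
    simp only [Prod.mk.injEq] at h
    obtain ⟨rfl, rfl, rfl⟩ := h
    simp only at h1 h1' h3
    have : C = C' := mul_right_cancel₀ (right_ne_zero_of_mul h3) (by linarith)
    rw [Subtype.mk.injEq, this]
  refine Summable.of_nonneg_of_le (fun q => by positivity) ?_
    (((hG.comp_injective i1).add (hG.comp_injective i2)).mul_left ((D : ℝ) + 1))
  rintro ⟨⟨A, Y, C, X⟩, h1, h2, h3⟩
  simp only [Function.comp_apply] at h1 h2 h3 ⊢
  have hA := left_ne_zero_of_mul h2
  have hY := right_ne_zero_of_mul h2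
  have hC := left_ne_zero_of_mul h3
  have hX := right_ne_zero_of_mul h3
  have hκ : (1 : ℝ) ≤ D + 1 := by simp
  have hPQ := abs_le_mul_abs_of_sub_eq h1 h3
  push_cast at hPQ
  have hP : (0 : ℝ) < |(A : ℝ) * Y| := by positivity
  have hsplit : |(A : ℝ) * Y| ^ (-(4 / 3 : ℝ)) = g A * g Y := by
    rw [abs_mul, Real.mul_rpow (abs_nonneg _) (abs_nonneg _)]
  rcases le_total |(C : ℝ)| |(X : ℝ)| with hle | hle
  · have := one_div_mul_le_rpow (s := |(C : ℝ)|) hP (by positivity) hκ hPQ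
      (by rw [abs_mul, sq]; gcongr)
    refine this.trans ?_
    rw [hsplit]
    gcongr
    have := mul_nonneg (hg0 A) (mul_nonneg (hg0 Y) (hg0 X))
    simp only [hg] at this ⊢
    linarith
  · have := one_div_mul_le_rpow (s := |(X : ℝ)|) hP (by positivity) hκ hPQ
      (by rw [abs_mul, sq]; gcongr)
    refine this.trans ?_
    rw [hsplit]
    gcongr
    have := mul_nonneg (hg0 A) (mul_nonneg (hg0 Y) (hg0 C))
    simp only [hg] at this ⊢
    linarith

/-- for `0 < m < w`, the integral of `S_{6,h}(z)·z^m` over the whole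
imaginary axis `z = iy`, `−∞ < y < ∞`, vanishes. -/
theorem S6_integral_zero (N : ℕ) (hN : 1 ≤ N) (w : ℕ) (hw : 2 ≤ w) (hwe : Even w)
    (n : ℕ) (hn0 : 0 < n) (hnw : n < w) (D : ℕ) (hD : 1 < D) (h : ℤ)
    (m : ℕ) (hm0 : 0 < m) (hmw : m < w) :
    (Complex.I * ∫ y : ℝ, S6 N D w n h (Complex.I * y) * (Complex.I * y) ^ m) = 0 := by
  have hD0 : (0 : ℝ) < D := by exact_mod_cast (by omega : 0 < D)
  set P : ℤ × ℤ × ℤ × ℤ → Prop := fun p =>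
    p.1 * p.2.2.2 - p.2.1 * p.2.2.1 = 1 ∧ (N : ℤ) ∣ p.2.2.1 ∧
        0 < (p.1 : ℝ) * p.2.2.1 * ((p.1 : ℝ) * h / D + p.2.1) *
          ((p.2.2.1 : ℝ) * h / D + p.2.2.2)
  set T : ℤ × ℤ × ℤ × ℤ → ℝ → ℂ := fun p t => seriesTerm (w - n) n m p.1
    ((p.1 : ℝ) * h / D + p.2.1) p.2.2.1 ((p.2.2.1 : ℝ) * h / D + p.2.2.2) (I * t) with hT
  have hS6 : ∀ t : ℝ, S6 N D w n h (I * t) * (I * t) ^ m = ∑' p, {p | P p}.indicator T p t := by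
    intro t
    rw [S6, ← tsum_mul_right]
    refine tsum_congr fun p => ?_
    by_cases hp : P p
    · rw [Set.indicator_of_mem (by exact hp), if_pos (by exact hp)]
      simp only [hT, seriesTerm]
      push_cast
      rw [one_div_mul_eq_div, ← add_assoc, ← add_assoc]
    · rw [Set.indicator_of_notMem (by exact hp), if_neg (by exact hp)]
      simp
  have hw' : w - n + n = w := by omega
  have hmw' : m < w - n + n := by omega
  have hr : 0 < w - n := by omega
  have hscale : ∀ a b : ℤ, (a : ℝ) * h / D + b = ((a * h + b * D : ℤ) : ℝ) / D := by
    intro a b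
    push_cast
    field_simp
  have hdet : ∀ a b c d : ℤ, a * d - b * c = 1 →
      a * (c * h + d * D) - c * (a * h + b * D) = D := by
    intro a b c d hd
    linear_combination (D : ℤ) * hd
  have hne : ∀ p, P p → p.1 ≠ 0 ∧ p.2.2.1 ≠ 0 ∧ p.1 * h + p.2.1 * D ≠ 0 ∧
      p.2.2.1 * h + p.2.2.2 * D ≠ 0 := by
    rintro ⟨a, b, c, d⟩ ⟨h1, h2, h3⟩
    simp only [hscale] at h3 ⊢
    refine ⟨?_, ?_, ?_, ?_⟩ <;> intro h0 <;> simp [h0] at h3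
  have hone : ∀ k : ℤ, k ≠ 0 → (1 : ℝ) ≤ |(k : ℝ)| := fun k hk => by
    exact_mod_cast Int.one_le_abs hk
  have hlow : ∀ k : ℤ, k ≠ 0 → (D : ℝ)⁻¹ ≤ |(k : ℝ) / D| := fun k hk => by
    rw [abs_div, abs_of_pos hD0, inv_eq_one_div]
    gcongr
    exact hone k hk
  have hδ : (0 : ℝ) < (D : ℝ)⁻¹ := by positivity
  have hδ1 : (D : ℝ)⁻¹ ≤ 1 := inv_le_one_of_one_le₀ (by exact_mod_cast hD.le)
  have hκ : (1 : ℝ) ≤ D + 1 := by simp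
  have hcomp : ∀ p, P p → |(p.2.2.1 : ℝ) * ((p.1 : ℝ) * h / D + p.2.1)| ≤
      (D + 1) * |(p.1 : ℝ) * ((p.2.2.1 : ℝ) * h / D + p.2.2.2)| := by
    rintro ⟨a, b, c, d⟩ hp
    obtain ⟨ha, hc, hx, hy⟩ := hne _ hp
    have h1 := hdet a b c d hp.1
    have h2 : -(c * (a * h + b * D)) - -(a * (c * h + d * D)) = D := by linarith
    have h3 := abs_le_mul_abs_of_sub_eq h2 (neg_ne_zero.mpr (mul_ne_zero ha hy))
    simp only [hscale, ← mul_div_assoc, abs_div]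
    gcongr
    rw [Int.cast_neg, Int.cast_neg, abs_neg, abs_neg, Int.cast_mul, Int.cast_mul] at h3
    exact h3
  have hTint : ∀ p, P p → Integrable (T p) := by
    intro p hp
    obtain ⟨ha, hc, hx, hy⟩ := hne p hp
    refine integrable_seriesTerm hm0 hmw' hr hn0 (hone _ ha) (hone _ hc) hδ hδ1 ?_ ?_ hκ
      (hcomp p hp)
    · rw [hscale]; exact hlow _ hx
    · rw [hscale]; exact hlow _ hy
  have hnorm : ∀ p, P p → ∫ t, ‖T p t‖ ≤ (D + 1) * π / (D : ℝ)⁻¹ ^ w * (D : ℝ) ^ 2 *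
      (1 / (|(p.1 : ℝ) * (p.2.2.1 * h + p.2.2.2 * D : ℤ)| *
        |(p.2.2.1 : ℝ) * (p.1 * h + p.2.1 * D : ℤ)|)) := by
    intro p hp
    obtain ⟨ha, hc, hx, hy⟩ := hne p hp
    have hb := integral_norm_seriesTerm_le hm0 hmw' hr hn0 (hone _ ha) (hone _ hc) hδ hδ1
      (by rw [hscale]; exact hlow _ hx) (by rw [hscale]; exact hlow _ hy) hκ (hcomp p hp)
    refine hb.trans (le_of_eq ?_)
    rw [hw', hscale, hscale, mul_assoc _ ((D : ℝ) ^ 2), ← mul_div_assoc (p.1 : ℝ),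
      ← mul_div_assoc (p.2.2.1 : ℝ), abs_div, abs_div _ (D : ℝ), abs_of_pos hD0]
    congr 1
    field_simp
  have hsum : Summable fun p => ∫ t, ‖{p | P p}.indicator T p t‖ := by
    have e : (fun p => ∫ t, ‖{p | P p}.indicator T p t‖) =
        {p | P p}.indicator fun p => ∫ t, ‖T p t‖ := by
      funext p
      by_cases hp : P p
      · rw [Set.indicator_of_mem (by exact hp), Set.indicator_of_mem (by exact hp)]
      · rw [Set.indicator_of_notMem (by exact hp), Set.indicator_of_notMem (by exact hp)]
        simp
    rw [e, ← summable_subtype_iff_indicator]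
    have φi : Function.Injective (fun p : {p | P p} =>
        (⟨(p.1.1, p.1.2.2.1 * h + p.1.2.2.2 * D, p.1.2.2.1, p.1.1 * h + p.1.2.1 * D),
          hdet _ _ _ _ p.2.1,
          mul_ne_zero (hne _ p.2).1 (hne _ p.2).2.2.2,
          mul_ne_zero (hne _ p.2).2.1 (hne _ p.2).2.2.1⟩ :
        {q : ℤ × ℤ × ℤ × ℤ // q.1 * q.2.1 - q.2.2.1 * q.2.2.2 = D ∧
          q.1 * q.2.1 ≠ 0 ∧ q.2.2.1 * q.2.2.2 ≠ 0})) := by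
      rintro ⟨⟨a, b, c, d⟩, hp⟩ ⟨⟨a', b', c', d'⟩, hp'⟩ heq
      simp only [Subtype.mk.injEq, Prod.mk.injEq] at heq
      obtain ⟨rfl, hd, rfl, hb⟩ := heq
      have hDz : (D : ℤ) ≠ 0 := by omega
      have hb' : b = b' := mul_right_cancel₀ hDz (by linarith)
      have hd' : d = d' := mul_right_cancel₀ hDz (by linarith)
      subst hb' hd'
      rfl
    exact Summable.of_nonneg_of_le (fun p => integral_nonneg fun t => norm_nonneg _)
      (fun p => hnorm p.1 p.2) (((summable_one_div_of_sub_eq D).comp_injective φi).mul_left _)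
  have hzero : ∀ p, ∫ t, {p | P p}.indicator T p t = 0 := by
    intro p
    by_cases hp : P p
    · rw [Set.indicator_of_mem (by exact hp)]
      refine integral_seriesTerm_eq_zero hmw'.le ?_ (hTint p hp)
      convert hp.2.2 using 1
      ring
    · rw [Set.indicator_of_notMem (by exact hp)]
      simp
  have hF : ∀ p, Integrable ({p | P p}.indicator T p) := by
    intro p
    by_cases hp : P p
    · rw [Set.indicator_of_mem (by exact hp)]
      exact hTint p hp
    · rw [Set.indicator_of_notMem (by exact hp)]
      exact integrable_zero _ _ _
  have hfinal := hasSum_integral_of_summable_integral_norm hF hsum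
  simp only [hzero] at hfinal
  simp only [hS6]
  rw [hfinal.unique hasSum_zero, mul_zero]

end
end
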